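/- arXiv:2004.10128 — 3 statements merged into one kernel-verified Lean document; each statement's English description precedes it below -/
import Mathlib

section
/- −cos(π/15) + cos(2π/15) + cos(4π/15) − cos(7π/15) = 1/2. -/
open Real

theorem stmt10 : -Real.cos (π / 15) + Real.cos (2 * π / 15) + Real.cos (4 * π / 15) - Real.cos (7 * π / 15) = 1 / 2 := by
  have h1 : Real.cos (π / 15) = -Real.cos (2 * (π / 5) - π / 3 + π) := by
    rw [Real.cos_add_pi, neg_neg, ← Real.cos_neg]
    rw [show -(π / 15) = -(2 * (π / 5) - π / 3) by ring, Real.cos_neg]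
  have h2 : Real.cos (2 * π / 15) = Real.cos (π / 3 - π / 5) := by congr 1; ring
  have h4 : Real.cos (4 * π / 15) = -Real.cos (2 * (π / 5) + π / 3) := by
    rw [← Real.cos_pi_sub]; congr 1; ring
  have h7 : Real.cos (7 * π / 15) = -Real.cos (π / 3 + π / 5) := by
    rw [← Real.cos_pi_sub]; congr 1; ring
  have h5 : √5 ^ 2 = (5 : ℝ) := Real.sq_sqrt (by norm_num)
  rw [h1, h2, h4, h7, Real.cos_add_pi, Real.cos_sub, Real.cos_sub, Real.cos_add, Real.cos_add,
    Real.cos_two_mul, Real.cos_pi_div_five, Real.cos_pi_div_three]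
  linear_combination (-1 / 8) * h5
end

section
/- Let n ≥ 4 be an even integer, let r ∈ ℚ with 0 < r < 1, let p, q be integers with 0 < q < p < n, and let r₀, r_p, r_q be real numbers each of the form k − r for some integer k. Then r₀·sin((p−q)π/n) + r_p·sin(qπ/n) − r_q·sin(pπ/n) ≠ 0. -/
open Real
lemma keyPhi {R : Type*} [CommRing R] [IsDomain R] (x : R) (m : ℕ) (hm : 0 < m)
    (hx : IsPrimitiveRoot x m) : (1 - x)^(m.totient) ∣ ((Polynomial.cyclotomic m ℤ).eval 1 : ℤ) := by
  have h := Polynomial.cyclotomic_eq_prod_X_sub_primitiveRoots hx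
  have h2 : (((Polynomial.cyclotomic m ℤ).eval 1 : ℤ) : R) = ∏ μ ∈ primitiveRoots m R, (1 - μ) := by
    have := congrArg (Polynomial.eval 1) h
    rw [Polynomial.eval_prod] at this
    simp only [Polynomial.eval_sub, Polynomial.eval_X, Polynomial.eval_C] at this
    rw [← this, ← Polynomial.map_cyclotomic_int m R]
    simp only [Polynomial.eval_one_map]; rfl
  rw [h2, ← hx.card_primitiveRoots, ← Finset.prod_const]
  apply Finset.prod_dvd_prod_of_dvd
  intro μ hμ
  have hμ' := (mem_primitiveRoots hm).1 hμ
  haveI : NeZero m := ⟨hm.ne'⟩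
  obtain ⟨i, -, rfl⟩ := hx.eq_pow_of_pow_eq_one hμ'.pow_eq_one
  exact one_sub_dvd_one_sub_pow x i

lemma keyL {R : Type*} [CommRing R] [IsDomain R] (x : R) (m : ℕ) (hm : 2 ≤ m)
    (hx : IsPrimitiveRoot x m) (l : ℕ) (hl : l.Prime) (E f : ℕ)
    (hE : ∀ k, 1 ≤ k → m = l^k → E ≤ f * m.totient) :
    ∃ t : ℕ, Nat.Coprime l t ∧ (1 - x)^E ∣ ((t * l^f : ℕ) : R) := by
  have hφ : 1 ≤ m.totient := Nat.totient_pos.2 (by omega)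
  have key := keyPhi x m (by omega) hx
  by_cases hpp : IsPrimePow m
  · obtain ⟨s, k, hs, hk, rfl⟩ := hpp
    have hs' : s.Prime := hs.nat_prime
    have : Fact s.Prime := ⟨hs'⟩
    obtain ⟨j, rfl⟩ : ∃ j, k = j + 1 := ⟨k - 1, by omega⟩
    rw [Polynomial.eval_one_cyclotomic_prime_pow] at key
    by_cases hsl : s = l
    · subst hsl
      refine ⟨1, by simp, ?_⟩
      refine (pow_dvd_pow _ (hE (j+1) (by omega) rfl)).trans ?_
      rw [mul_comm, pow_mul]
      simpa using pow_dvd_pow_of_dvd key f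
    · refine ⟨s^E, Nat.Coprime.pow_right _ ((Nat.coprime_primes hl hs').2 (Ne.symm hsl)), ?_⟩
      push_cast
      apply Dvd.dvd.mul_right
      apply pow_dvd_pow_of_dvd
      refine (dvd_pow_self _ (Nat.pos_iff_ne_zero.1 hφ)).trans (by simpa using key)
  · refine ⟨1, by simp, ?_⟩
    rw [Polynomial.eval_one_cyclotomic_not_prime_pow] at key
    · have : (1 - x) ∣ 1 := (dvd_pow_self _ (Nat.pos_iff_ne_zero.1 hφ)).trans (by simpa using key)
      exact ((isUnit_of_dvd_one this).pow E).dvd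
    · intro p hp k hk
      apply hpp
      rcases Nat.eq_zero_or_pos k with rfl | hk0
      · simp at hk; omega
      · exact ⟨p, k, hp.prime, hk0, hk⟩

abbrev OO := integralClosure ℤ ℂ

lemma natdvd (a b : ℕ) (ha : a ≠ 0) (h : (a : OO) ∣ (b : OO)) : a ∣ b := by
  obtain ⟨c, hc⟩ := h
  have hc' : (b : ℂ) = a * (c : ℂ) := by exact_mod_cast congrArg (Subtype.val) hc
  have hi : IsIntegral ℤ (c : ℂ) := c.2
  have ha' : (a : ℂ) ≠ 0 := by exact_mod_cast ha
  have e : (c : ℂ) = algebraMap ℚ ℂ ((b : ℚ) / a) := by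
    simp; field_simp; rw [hc']; ring
  rw [e, isIntegral_algebraMap_iff (algebraMap ℚ ℂ).injective] at hi
  obtain ⟨z, hz⟩ := IsIntegrallyClosed.isIntegral_iff.1 hi
  have ha'' : (a : ℚ) ≠ 0 := by exact_mod_cast ha
  simp at hz
  field_simp at hz
  have : (a : ℤ) ∣ b := ⟨z, by exact_mod_cast (by linarith : (b:ℚ) = a * z)⟩
  exact_mod_cast this

lemma core (x y z : OO) (mx my mz : ℕ) (hx : IsPrimitiveRoot x mx) (hy : IsPrimitiveRoot y my)
    (hz : IsPrimitiveRoot z mz) (hmx : 2 ≤ mx) (hmy : 2 ≤ my) (hmz : 2 ≤ mz)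
    (l : ℕ) (hl : l.Prime) (E : ℕ) (f : ℕ → ℕ)
    (hf : ∀ k, 1 ≤ k → (l^k = mx ∨ l^k = my ∨ l^k = mz) → E ≤ f (l^k) * (l^k).totient)
    (hs : f mx + f my + f mz < E) (u : ℕ) (hu : Nat.Coprime l u)
    (hd : (l : OO) ∣ u * ((1 - x) * (1 - y) * (1 - z))) : False := by
  obtain ⟨t1, c1, d1⟩ := keyL x mx hmx hx l hl E (f mx) (by
    rintro k hk rfl; exact hf k hk (by simp))
  obtain ⟨t2, c2, d2⟩ := keyL y my hmy hy l hl E (f my) (by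
    rintro k hk rfl; exact hf k hk (by simp))
  obtain ⟨t3, c3, d3⟩ := keyL z mz hmz hz l hl E (f mz) (by
    rintro k hk rfl; exact hf k hk (by simp))
  have h := pow_dvd_pow_of_dvd hd E
  rw [mul_pow, mul_pow, mul_pow] at h
  have h2 := h.trans (mul_dvd_mul_left _ (mul_dvd_mul (mul_dvd_mul d1 d2) d3))
  have h3 : l^E ∣ (u^E * t1 * t2 * t3) * l^(f mx + f my + f mz) := by
    apply natdvd _ _ (pow_ne_zero _ hl.ne_zero)
    convert h2 using 1
    · push_cast; rfl
    · push_cast; ring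
  have hc : Nat.Coprime (l^E) (u^E * t1 * t2 * t3) := by
    apply Nat.Coprime.pow_left
    exact (((hu.pow_right E).mul_right c1).mul_right c2).mul_right c3
  have h4 := hc.dvd_of_dvd_mul_left h3
  have := (Nat.pow_dvd_pow_iff_le_right hl.one_lt).1 h4
  omega

lemma orders (n a b : ℕ) (ha : 0 < a) (hb : 0 < b) (hab : a + b < n) (ζ : OO)
    (hζ : IsPrimitiveRoot ζ (2 * n)) (l : ℕ) (hl : l.Prime) (u : ℕ) (hu : Nat.Coprime l u)
    (hd : (l : OO) ∣ u * ((1 - ζ^a) * (1 - ζ^b) * (1 - ζ^(a+b)))) :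
    (n = 4 * a ∧ n = 4 * b) ∨ (n = 2 * a ∧ n = 4 * b) ∨ (n = 4 * a ∧ n = 2 * b) := by
  by_contra hcon
  have hpow : ∀ c, ∃ m, IsPrimitiveRoot (ζ^c) m ∧ (2 * n ∣ c * m) ∧ (0 < c → c < n → 3 ≤ m) := by
    intro c
    refine ⟨orderOf (ζ^c), IsPrimitiveRoot.orderOf _, ?_, ?_⟩
    · rw [← hζ.pow_eq_one_iff_dvd, pow_mul, pow_orderOf_eq_one]
    · intro h0 h1
      have hd : 2 * n ∣ c * orderOf (ζ^c) := by
        rw [← hζ.pow_eq_one_iff_dvd, pow_mul, pow_orderOf_eq_one]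
      have hpos : 0 < orderOf (ζ^c) := by
        rw [orderOf_pos_iff, isOfFinOrder_iff_pow_eq_one]
        refine ⟨2*n, by omega, ?_⟩
        rw [← pow_mul, mul_comm, pow_mul, hζ.pow_eq_one, one_pow]
      have := Nat.le_of_dvd (by positivity) hd
      by_contra hlt
      have : c * orderOf (ζ^c) ≤ c * 2 := Nat.mul_le_mul_left _ (by omega)
      omega
  obtain ⟨ma, pa, da, ga⟩ := hpow a
  obtain ⟨mb, pb, db, gb⟩ := hpow b
  obtain ⟨mc, pc, dc, gc⟩ := hpow (a+b)
  have ga := ga ha (by omega)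
  have gb := gb hb (by omega)
  have gc := gc (by omega) (by omega)
  have C := core _ _ _ ma mb mc pa pb pc (by omega) (by omega) (by omega) l hl
  have O3 : ∀ c, 0 < c → c < n → 2 * n ∣ c * 3 → 3 * c = 2 * n := by
    rintro c h1 h2 ⟨d, hd⟩
    have : d = 1 := by
      have : d < 2 := by by_contra h; have := Nat.mul_le_mul_left (2*n) (not_lt.1 h); omega
      have : d ≠ 0 := by rintro rfl; omega
      omega
    subst this; omega
  have O4 : ∀ c, 0 < c → c < n → 2 * n ∣ c * 4 → 2 * c = n := by
    rintro c h1 h2 ⟨d, hd⟩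
    have : d = 1 := by
      have : d < 2 := by by_contra h; have := Nat.mul_le_mul_left (2*n) (not_lt.1 h); omega
      have : d ≠ 0 := by rintro rfl; omega
      omega
    subst this; omega
  have O8 : ∀ c, 0 < c → c < n → 2 * n ∣ c * 8 → 4 * c = n ∨ 2 * c = n ∨ 4 * c = 3 * n := by
    rintro c h1 h2 ⟨d, hd⟩
    have : d < 4 := by by_contra h; have := Nat.mul_le_mul_left (2*n) (not_lt.1 h); omega
    interval_cases d <;> omega
  have hl2 := hl.two_le
  rcases (by
    have : l ≠ 4 := by rintro rfl; revert hl; decide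
    omega : l = 2 ∨ l = 3 ∨ 5 ≤ l) with rfl | rfl | h5
  · refine C 8 (fun m => if m = 4 then 4 else if m = 8 then 2 else 1) ?_ ?_ u hu hd
    · intro k hk hm
      have hk1 : k ≠ 1 := by rintro rfl; omega
      by_cases h2 : k = 2
      · subst h2; decide
      by_cases h3 : k = 3
      · subst h3; decide
      have h16 : 2^4 ∣ 2^k := pow_dvd_pow 2 (by omega)
      have ht := Nat.le_of_dvd (Nat.totient_pos.2 (by positivity)) (Nat.totient_dvd_of_dvd h16)
      have : Nat.totient (2^4) = 8 := by decide
      have h1 : 2^4 ≤ 2^k := Nat.le_of_dvd (by positivity) h16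
      rw [if_neg (by omega), if_neg (by omega)]; omega
    · have A4 : ma = 4 → 2 * a = n := by rintro rfl; exact O4 a ha (by omega) da
      have B4 : mb = 4 → 2 * b = n := by rintro rfl; exact O4 b hb (by omega) db
      have C4 : mc = 4 → 2 * (a+b) = n := by rintro rfl; exact O4 (a+b) (by omega) (by omega) dc
      have A8 : ma = 8 → 4 * a = n ∨ 2 * a = n ∨ 4 * a = 3 * n := by rintro rfl; exact O8 a ha (by omega) da
      have B8 : mb = 8 → 4 * b = n ∨ 2 * b = n ∨ 4 * b = 3 * n := by rintro rfl; exact O8 b hb (by omega) db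
      have C8 : mc = 8 → 4 * (a+b) = n ∨ 2 * (a+b) = n ∨ 4 * (a+b) = 3 * n := by rintro rfl; exact O8 (a+b) (by omega) (by omega) dc
      split_ifs <;> omega
  · refine C 6 (fun m => if m = 3 then 3 else 1) ?_ ?_ u hu hd
    · intro k hk hm
      by_cases h1 : k = 1
      · subst h1; decide
      have h9 : 3^2 ∣ 3^k := pow_dvd_pow 3 (by omega)
      have ht := Nat.le_of_dvd (Nat.totient_pos.2 (by positivity)) (Nat.totient_dvd_of_dvd h9)
      have : Nat.totient (3^2) = 6 := by decide
      have h1 : 3^2 ≤ 3^k := Nat.le_of_dvd (by positivity) h9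
      rw [if_neg (by omega)]; omega
    · have A3 : ma = 3 → 3 * a = 2 * n := by rintro rfl; exact O3 a ha (by omega) da
      have B3 : mb = 3 → 3 * b = 2 * n := by rintro rfl; exact O3 b hb (by omega) db
      have C3 : mc = 3 → 3 * (a+b) = 2 * n := by rintro rfl; exact O3 (a+b) (by omega) (by omega) dc
      split_ifs <;> omega
  · refine C 4 (fun _ => 1) ?_ (by norm_num) u hu hd
    intro k hk hm
    have h9 : l ∣ l^k := dvd_pow_self _ (by omega)
    have hp : 0 < l^k := Nat.pow_pos (by omega)
    have ht := Nat.le_of_dvd (Nat.totient_pos.2 hp) (Nat.totient_dvd_of_dvd h9)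
    rw [Nat.totient_prime hl] at ht
    omega

lemma irr (s t : ℚ) (h : (s : ℝ) * √2 = t) : t = 0 := by
  by_contra ht
  have hs : s ≠ 0 := by rintro rfl; simp at h; exact ht (by exact_mod_cast h.symm)
  apply irrational_sqrt_two
  refine ⟨t / s, ?_⟩
  have : (s : ℝ) ≠ 0 := by exact_mod_cast hs
  push_cast
  field_simp
  linarith

lemma sinz (n c : ℕ) (hn : 0 < n) :
    2 * Complex.I * ((Real.sin (c * π / n) : ℝ) : ℂ)
      * (Complex.exp (2 * π * Complex.I / ((2 * n : ℕ) : ℂ)))^c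
    = ((Complex.exp (2 * π * Complex.I / ((2 * n : ℕ) : ℂ)))^c)^2 - 1 := by
  have hn' : (n : ℂ) ≠ 0 := by exact_mod_cast hn.ne'
  rw [← Complex.exp_nat_mul]
  have e : (c : ℂ) * (2 * π * Complex.I / ((2 * n : ℕ) : ℂ)) = (c * π / n) * Complex.I := by
    push_cast; field_simp
  rw [e, Complex.ofReal_sin]
  push_cast
  rw [Complex.sin, neg_mul, Complex.exp_neg]
  have := Complex.exp_ne_zero ((c * π / n : ℂ) * Complex.I)
  generalize Complex.exp ((c * π / n : ℂ) * Complex.I) = w at *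
  field_simp
  linear_combination (1 - w^2) * Complex.I_sq

lemma mainNat (n a b : ℕ) (ha : 0 < a) (hb : 0 < b) (hab : a + b < n)
    (r : ℚ) (hr0 : 0 < r) (hr1 : r < 1) (k0 kp kq : ℤ)
    (h : ((k0 : ℝ) - r) * Real.sin (a * π / n) + ((kp : ℝ) - r) * Real.sin (b * π / n)
      - ((kq : ℝ) - r) * Real.sin ((a + b : ℕ) * π / n) = 0) : False := by
  have hnotint : ∀ k : ℤ, (k : ℚ) - r ≠ 0 := by
    intro k hk
    have h1 : (0 : ℚ) < k := by linarith
    have h2 : (k : ℚ) < 1 := by linarith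
    have h1' : 0 < k := by exact_mod_cast h1
    have h2' : k < 1 := by exact_mod_cast h2
    omega
  have hn : 0 < n := by omega
  have hn' : (n : ℝ) ≠ 0 := by exact_mod_cast hn.ne'
  have hcases : (n = 4 * a ∧ n = 4 * b) ∨ (n = 2 * a ∧ n = 4 * b) ∨ (n = 4 * a ∧ n = 2 * b) := by
    have hz := Complex.isPrimitiveRoot_exp (2 * n) (by omega)
    have s1 := sinz n a hn
    have s2 := sinz n b hn
    have s3 := sinz n (a + b) hn
    have hC := congrArg (fun t : ℝ => (t : ℂ)) h
    push_cast at hC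
    push_cast at s1 s2 s3 hz
    set z := Complex.exp (2 * π * Complex.I / (2 * n : ℂ)) with hzdef
    have hzi : IsIntegral ℤ z := hz.isIntegral (by omega)
    let ζ : OO := ⟨z, hzi⟩
    have hζ : IsPrimitiveRoot ζ (2 * n) := by
      apply IsPrimitiveRoot.of_map_of_injective (f := OO.val) (h := ?_) (hf := Subtype.val_injective)
      exact hz
    have hrel : ((k0 : ℂ) - r) * ((z^a)^2 - 1) * z^b + ((kp : ℂ) - r) * ((z^b)^2 - 1) * z^a
        - ((kq : ℂ) - r) * ((z^(a+b))^2 - 1) = 0 := by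
      rw [← s1, ← s2, ← s3]
      rw [pow_add]
      linear_combination (2 * Complex.I * z^a * z^b) * hC
    have hden : (r.den : ℂ) ≠ 0 := by exact_mod_cast r.den_ne_zero
    have hrnum : (r.num.natAbs : ℤ) = r.num := Int.natAbs_of_nonneg (Rat.num_nonneg.2 hr0.le)
    have hr : (r : ℂ) * r.den = (r.num.natAbs : ℂ) := by
      have h1 : r * r.den = r.num := Rat.mul_den_eq_num r
      have h2 : ((r.num.natAbs : ℤ) : ℂ) = r.num := by rw [hrnum]
      have h3 : (r : ℂ) * r.den = r.num := by exact_mod_cast congrArg (fun t : ℚ => (t : ℂ)) h1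
      rw [h3, ← h2]; simp
    have hO : (r.num.natAbs : OO) * ((1 - ζ^a) * (1 - ζ^b) * (1 - ζ^(a+b)))
        = (r.den : OO) * ((k0 : OO) * ((ζ^a)^2 - 1) * ζ^b + (kp : OO) * ((ζ^b)^2 - 1) * ζ^a
        - (kq : OO) * ((ζ^(a+b))^2 - 1)) := by
      apply Subtype.val_injective
      push_cast
      change (r.num.natAbs : ℂ) * ((1 - z^a) * (1 - z^b) * (1 - z^(a+b)))
        = (r.den : ℂ) * ((k0 : ℂ) * ((z^a)^2 - 1) * z^b + (kp : ℂ) * ((z^b)^2 - 1) * z^a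
        - (kq : ℂ) * ((z^(a+b))^2 - 1))
      rw [← hr]
      rw [pow_add] at hrel ⊢
      linear_combination (-(r.den : ℂ)) * hrel
    have hden1 : r.den ≠ 1 := by
      intro h1
      apply hnotint r.num
      rw [Rat.den_eq_one_iff] at h1
      linarith
    obtain ⟨l, hl, hld⟩ := Nat.exists_prime_and_dvd hden1
    refine orders n a b ha hb hab ζ hζ l hl r.num.natAbs ?_ ?_
    · exact (r.reduced.coprime_dvd_right hld).symm
    · rw [hO]
      exact (Nat.cast_dvd_cast hld).mul_right _
  rcases hcases with ⟨h1, h2⟩ | ⟨h1, h2⟩ | ⟨h1, h2⟩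
  · have e1 : (n : ℝ) = 4 * a := by exact_mod_cast h1
    have e2 : (n : ℝ) = 4 * b := by exact_mod_cast h2
    have t1 : (a : ℝ) * π / n = π / 4 := by field_simp; linarith
    have t2 : (b : ℝ) * π / n = π / 4 := by field_simp; linarith
    have t3 : ((a + b : ℕ) : ℝ) * π / n = π / 2 := by push_cast; field_simp; linarith
    rw [t1, t2, t3, Real.sin_pi_div_four, Real.sin_pi_div_two] at h
    exact hnotint kq (irr ((k0 - r + (kp - r)) / 2) _ (by push_cast; linarith))
  · have e1 : (n : ℝ) = 2 * a := by exact_mod_cast h1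
    have e2 : (n : ℝ) = 4 * b := by exact_mod_cast h2
    have t1 : (a : ℝ) * π / n = π / 2 := by field_simp; linarith
    have t2 : (b : ℝ) * π / n = π / 4 := by field_simp; linarith
    have t3 : ((a + b : ℕ) : ℝ) * π / n = π - π / 4 := by push_cast; field_simp; linarith
    rw [t1, t2, t3, Real.sin_pi_sub, Real.sin_pi_div_four, Real.sin_pi_div_two] at h
    exact hnotint k0 (irr ((kq - kp) / 2) _ (by push_cast; linarith))
  · have e1 : (n : ℝ) = 4 * a := by exact_mod_cast h1
    have e2 : (n : ℝ) = 2 * b := by exact_mod_cast h2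
    have t1 : (a : ℝ) * π / n = π / 4 := by field_simp; linarith
    have t2 : (b : ℝ) * π / n = π / 2 := by field_simp; linarith
    have t3 : ((a + b : ℕ) : ℝ) * π / n = π - π / 4 := by push_cast; field_simp; linarith
    rw [t1, t2, t3, Real.sin_pi_sub, Real.sin_pi_div_four, Real.sin_pi_div_two] at h
    exact hnotint kp (irr ((kq - k0) / 2) _ (by push_cast; linarith))

theorem stmt15 (n p q : ℤ) (hn : Even n) (hn4 : 4 ≤ n)
    (r : ℚ) (hr0 : 0 < r) (hr1 : r < 1)
    (hq : 0 < q) (hqp : q < p) (hpn : p < n)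
    (r₀ rp rq : ℝ)
    (h0 : ∃ k : ℤ, r₀ = (k : ℝ) - (r : ℝ))
    (hp : ∃ k : ℤ, rp = (k : ℝ) - (r : ℝ))
    (hqr : ∃ k : ℤ, rq = (k : ℝ) - (r : ℝ)) :
    r₀ * Real.sin (((p : ℝ) - q) * π / n)
      + rp * Real.sin ((q : ℝ) * π / n)
      - rq * Real.sin ((p : ℝ) * π / n) ≠ 0 := by
  intro h
  obtain ⟨k0, rfl⟩ := h0
  obtain ⟨kp, rfl⟩ := hp
  obtain ⟨kq, rfl⟩ := hqr
  lift n to ℕ using by omega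
  lift q to ℕ using by omega
  obtain ⟨a, ha⟩ : ∃ a : ℕ, p = a + q := ⟨(p - q).toNat, by omega⟩
  subst ha
  refine mainNat n a q (by omega) (by omega) (by omega) r hr0 hr1 k0 kp kq ?_
  push_cast at h ⊢
  rw [add_sub_cancel_right] at h
  exact h
end

section
/- Let a ≤ b ≤ c be rational angles (real numbers of the form π·q with q ∈ ℚ) strictly between 0 and π/2, not all equal, and let A, B, C be nonzero rational numbers with A·cos(a) + B·cos(b) + C·cos(c) = 0. Then either (a, b, c) = (π/5, π/3, 2π/5) and B = C = −A, or there exists θ with 0 < θ < π/6 such that (a, b, c) = (θ, π/3 − θ, π/3 + θ) and B = C = −A. -/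
open Real

/-- Galois conjugation of a vanishing sum. -/
lemma galois_aux (N : ℕ) (hN : 0 < N) (ζ : ℂ) (hζ : IsPrimitiveRoot ζ N) (l : Fin 3 → ℕ) (A : Fin 3 → ℚ)
    (h : ∑ i, (A i : ℂ) * (ζ ^ (l i : ℤ) + ζ ^ (-(l i : ℤ))) = 0) (k : ℕ) (hk : k.Coprime N) :
    ∑ i, (A i : ℂ) * (ζ ^ ((k : ℤ) * l i) + ζ ^ (-((k : ℤ) * l i))) = 0 := by
  have hred : ∀ ξ : ℂ, ξ ^ N = 1 → ∀ m : ℕ, ξ ^ (-(m : ℤ)) = ξ ^ ((N - 1) * m) := by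
    intro ξ hξ m
    have h0 : ξ ≠ 0 := by
      rintro rfl
      rw [zero_pow hN.ne'] at hξ
      exact zero_ne_one hξ
    rw [zpow_neg, zpow_natCast]
    refine inv_eq_of_mul_eq_one_left ?_
    rw [← pow_add]
    have : (N - 1) * m + m = N * m := by
      obtain ⟨n, rfl⟩ := Nat.exists_eq_succ_of_ne_zero hN.ne'
      simp [Nat.succ_mul]
    rw [this, pow_mul, hξ, one_pow]
  let P : Polynomial ℚ := ∑ i, Polynomial.C (A i) * (Polynomial.X ^ (l i) + Polynomial.X ^ ((N - 1) * l i))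
  have hP : ∀ ξ : ℂ, ξ ^ N = 1 →
      Polynomial.aeval ξ P = ∑ i, (A i : ℂ) * (ξ ^ (l i : ℤ) + ξ ^ (-(l i : ℤ))) := by
    intro ξ hξ
    simp only [P, map_sum, map_mul, map_add, map_pow, Polynomial.aeval_X, Polynomial.aeval_C, hred ξ hξ, zpow_natCast]
    simp
  have hζk := hζ.pow_of_coprime k hk
  have h1 : Polynomial.aeval ζ P = 0 := by rw [hP ζ hζ.pow_eq_one, h]
  have h2 : minpoly ℚ ζ ∣ P := minpoly.dvd _ _ h1
  rw [← Polynomial.cyclotomic_eq_minpoly_rat hζ hN, Polynomial.cyclotomic_eq_minpoly_rat hζk hN] at h2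
  have h3 : Polynomial.aeval (ζ ^ k) P = 0 := by
    obtain ⟨Q, hQ⟩ := h2
    rw [hQ, map_mul, minpoly.aeval, zero_mul]
  rw [hP _ hζk.pow_eq_one] at h3
  rw [← h3]
  refine Finset.sum_congr rfl fun i _ => ?_
  rw [← zpow_natCast ζ k, ← zpow_mul, ← zpow_mul, mul_neg]

lemma geom_aux (p : ℕ) (ω : ℂ) (hω : IsPrimitiveRoot ω p) (m : ℤ) :
    ∑ t ∈ Finset.range p, ω ^ (m * t) = if (p : ℤ) ∣ m then (p : ℂ) else 0 := by
  simp only [zpow_mul, zpow_natCast]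
  split_ifs with h
  · rw [(hω.zpow_eq_one_iff_dvd m).2 h]; simp
  · have h1 : ω ^ m ≠ 1 := fun h' => h ((hω.zpow_eq_one_iff_dvd m).1 h')
    rw [geom_sum_eq h1, ← zpow_natCast, zpow_comm, zpow_natCast, hω.pow_eq_one]; simp

/-- The part of the sum in class `j` mod `p`. -/
noncomputable def cls (p : ℕ) (ζ : ℂ) (l : Fin 3 → ℕ) (A : Fin 3 → ℚ) (j : ℤ) : ℂ :=
  ∑ i, (A i : ℂ) * ((if (p : ℤ) ∣ (l i : ℤ) - j then ζ ^ (l i : ℤ) else 0)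
    + (if (p : ℤ) ∣ -(l i : ℤ) - j then ζ ^ (-(l i : ℤ)) else 0))

lemma dft_aux (p M : ℕ) (hp : p.Prime) (hM : 0 < M) (ζ : ℂ) (hζ : IsPrimitiveRoot ζ (p * M))
    (l : Fin 3 → ℕ) (A : Fin 3 → ℚ) (j : ℤ) :
    ∑ t ∈ Finset.range p, (ζ ^ M) ^ (-j * t) * ∑ i, (A i : ℂ) * (ζ ^ (((1 + t * M : ℕ) : ℤ) * l i)
      + ζ ^ (-(((1 + t * M : ℕ) : ℤ) * l i))) = p * cls p ζ l A j := by
  have hω : IsPrimitiveRoot (ζ ^ M) p := hζ.pow (Nat.mul_pos hp.pos hM) (mul_comm p M)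
  have h0 : ζ ≠ 0 := hζ.ne_zero (Nat.mul_pos hp.pos hM).ne'
  have key : ∀ m : ℤ, ∑ t ∈ Finset.range p, (ζ ^ M) ^ (-j * t) * ζ ^ (((1 + t * M : ℕ) : ℤ) * m)
      = p * (if (p : ℤ) ∣ m - j then ζ ^ m else 0) := by
    intro m
    have := geom_aux p (ζ ^ M) hω (m - j)
    rw [show (p : ℂ) * (if (p : ℤ) ∣ m - j then ζ ^ m else 0)
      = ζ ^ m * (if (p : ℤ) ∣ m - j then (p : ℂ) else 0) by split_ifs <;> ring, ← this, Finset.mul_sum]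
    refine Finset.sum_congr rfl fun t _ => ?_
    rw [← zpow_natCast ζ M, ← zpow_mul, ← zpow_mul, ← zpow_add₀ h0, ← zpow_add₀ h0]
    congr 1
    push_cast
    ring
  unfold cls
  simp only [Finset.mul_sum]
  rw [Finset.sum_comm]
  refine Finset.sum_congr rfl fun i _ => ?_
  have k1 := key (l i)
  have k2 := key (-(l i))
  simp only [mul_neg] at k2
  calc _ = (A i : ℂ) * (∑ t ∈ Finset.range p, (ζ ^ M) ^ (-j * t) * ζ ^ (((1 + t * M : ℕ) : ℤ) * l i)
      + ∑ t ∈ Finset.range p, (ζ ^ M) ^ (-j * t) * ζ ^ (-(((1 + t * M : ℕ) : ℤ) * l i))) := by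
        rw [← Finset.sum_add_distrib, Finset.mul_sum]
        refine Finset.sum_congr rfl fun t _ => ?_
        ring
    _ = _ := by rw [k1, k2]; ring

lemma cls_sq (p M : ℕ) (hp : p.Prime) (hM : 0 < M) (hpM : p ∣ M) (ζ : ℂ) (hζ : IsPrimitiveRoot ζ (p * M))
    (l : Fin 3 → ℕ) (A : Fin 3 → ℚ)
    (h : ∑ i, (A i : ℂ) * (ζ ^ (l i : ℤ) + ζ ^ (-(l i : ℤ))) = 0) (j : ℤ) : cls p ζ l A j = 0 := by
  have h1 := dft_aux p M hp hM ζ hζ l A j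
  rw [Finset.sum_eq_zero] at h1
  · have : (p : ℂ) ≠ 0 := by exact_mod_cast hp.ne_zero
    exact (mul_eq_zero.1 h1.symm).resolve_left this
  · intro t _
    rw [galois_aux _ (Nat.mul_pos hp.pos hM) ζ hζ l A h (1 + t * M), mul_zero]
    have hc : (1 + t * M).Coprime M := by simp
    exact Nat.Coprime.mul_right (hc.coprime_dvd_right hpM) hc

lemma cls_const (p M : ℕ) (hp : p.Prime) (hM : 0 < M) (hpM : ¬ p ∣ M) (ζ : ℂ) (hζ : IsPrimitiveRoot ζ (p * M))
    (l : Fin 3 → ℕ) (A : Fin 3 → ℚ)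
    (h : ∑ i, (A i : ℂ) * (ζ ^ (l i : ℤ) + ζ ^ (-(l i : ℤ))) = 0) :
    ∃ t : ℕ, ∃ V : ℂ, ∀ j, cls p ζ l A j = (ζ ^ M) ^ (-j * t) * V := by
  have ht : ∃ t0 ∈ Finset.range p, ∀ t ∈ Finset.range p, t ≠ t0 → (1 + t * M).Coprime p := by
    by_cases hb : ∃ t0 ∈ Finset.range p, p ∣ 1 + t0 * M
    · obtain ⟨t0, h0, hd⟩ := hb
      refine ⟨t0, h0, fun t ht hne => ?_⟩
      rw [Nat.coprime_comm, hp.coprime_iff_not_dvd]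
      intro hd'
      apply hne
      have e1 : 1 + t * M ≡ 1 + t0 * M [MOD p] :=
        ((Nat.modEq_zero_iff_dvd).2 hd').trans ((Nat.modEq_zero_iff_dvd).2 hd).symm
      have e2 : t * M ≡ t0 * M [MOD p] := Nat.ModEq.add_left_cancel' 1 e1
      have e3 : t ≡ t0 [MOD p] := Nat.ModEq.cancel_right_of_coprime ((hp.coprime_iff_not_dvd).2 hpM) e2
      exact Nat.ModEq.eq_of_lt_of_lt e3 (Finset.mem_range.1 ht) (Finset.mem_range.1 h0)
    · push Not at hb
      refine ⟨0, by simp [hp.pos], fun t ht _ => ?_⟩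
      rw [Nat.coprime_comm, hp.coprime_iff_not_dvd]
      exact hb t ht
  obtain ⟨t0, h0, hco⟩ := ht
  have hp0 : (p : ℂ) ≠ 0 := by exact_mod_cast hp.ne_zero
  refine ⟨t0, (∑ i, (A i : ℂ) * (ζ ^ (((1 + t0 * M : ℕ) : ℤ) * l i)
      + ζ ^ (-(((1 + t0 * M : ℕ) : ℤ) * l i)))) / p, fun j => ?_⟩
  have h1 := dft_aux p M hp hM ζ hζ l A j
  rw [Finset.sum_eq_single_of_mem t0 h0] at h1
  · field_simp
    rw [mul_comm (cls p ζ l A j), ← h1]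
  · intro t ht hne
    rw [galois_aux _ (Nat.mul_pos hp.pos hM) ζ hζ l A h (1 + t * M), mul_zero]
    exact Nat.Coprime.mul_right (hco t ht hne) (by simp)

lemma niven_lt {x : ℝ} (hx : ∃ r : ℚ, x = π * r) (hq : ∃ q : ℚ, cos x = q) (h1 : -π < x) (h2 : x < π)
    (h0 : x ≠ 0) : cos x = -1 / 2 ∨ cos x = 0 ∨ cos x = 1 / 2 := by
  have hx' : ∃ r : ℚ, x = r * π := by
    obtain ⟨r, hr⟩ := hx
    exact ⟨r, by rw [hr]; ring⟩
  have h := niven hx' hq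
  simp only [Set.mem_insert_iff, Set.mem_singleton_iff] at h
  rcases h with h | h | h | h | h
  · exfalso
    have h3 : cos |x| = cos π := by rw [cos_abs, h, cos_pi]
    have h4 := injOn_cos ⟨abs_nonneg x, (abs_lt.2 ⟨h1, h2⟩).le⟩ ⟨pi_pos.le, le_refl π⟩ h3
    have := abs_lt.2 ⟨h1, h2⟩
    linarith
  · exact Or.inl h
  · exact Or.inr (Or.inl h)
  · exact Or.inr (Or.inr h)
  · exfalso
    rw [cos_eq_one_iff_of_lt_of_lt (by linarith) (by linarith)] at h
    exact h0 h

lemma abs_of_cos_half {x : ℝ} (h1 : -π < x) (h2 : x < π) (h : cos x = 1 / 2) : x = π / 3 ∨ x = -(π / 3) := by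
  have h3 : cos |x| = cos (π / 3) := by rw [cos_abs, h, cos_pi_div_three]
  have h4 := injOn_cos ⟨abs_nonneg x, (abs_lt.2 ⟨h1, h2⟩).le⟩
    ⟨by linarith [pi_pos], by linarith [pi_pos]⟩ h3
  exact (abs_eq (by linarith [pi_pos])).1 h4

lemma abs_of_cos_neg_half {x : ℝ} (h1 : -π < x) (h2 : x < π) (h : cos x = -1 / 2) :
    x = 2 * π / 3 ∨ x = -(2 * π / 3) := by
  have h3 : cos |x| = cos (π - π / 3) := by rw [cos_abs, h, cos_pi_sub, cos_pi_div_three]; ring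
  have h4 := injOn_cos ⟨abs_nonneg x, (abs_lt.2 ⟨h1, h2⟩).le⟩
    ⟨by linarith [pi_pos], by linarith [pi_pos]⟩ h3
  rw [show π - π / 3 = 2 * π / 3 by ring] at h4
  exact (abs_eq (by linarith [pi_pos])).1 h4

/-- The conclusion of the theorem. -/
def Concl (a b c : ℝ) (A B C : ℚ) : Prop :=
  (a = π / 5 ∧ b = π / 3 ∧ c = 2 * π / 5 ∧ B = -A ∧ C = -A) ∨
    (∃ θ : ℝ, 0 < θ ∧ θ < π / 6 ∧ a = θ ∧ b = π / 3 - θ ∧ c = π / 3 + θ ∧ B = -A ∧ C = -A)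

lemma triangle_aux (a b c b' c' : ℝ)
    (ha : ∃ q : ℚ, a = π * q) (hb : ∃ q : ℚ, b = π * q) (hc : ∃ q : ℚ, c = π * q)
    (hab : a ≤ b) (hbc : b ≤ c)
    (h0a : 0 < a) (hc2 : c < π / 2)
    (hne : ¬ (a = b ∧ b = c))
    (A B C : ℚ) (hA : A ≠ 0) (hB : B ≠ 0) (hC : C ≠ 0)
    (hb' : b' = b ∨ b' = -b) (hc' : c' = c ∨ c' = -c)
    (heq : (A : ℝ) * cos a + B * cos b + C * cos c = 0)
    (hs : (A : ℝ) * sin a + B * sin b' + C * sin c' = 0) : Concl a b c A B C := by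
  have hcb : cos b' = cos b := by rcases hb' with rfl | rfl <;> simp
  have hcc : cos c' = cos c := by rcases hc' with rfl | rfl <;> simp
  have hc0 : 0 < cos c := cos_pos_of_mem_Ioo ⟨by linarith, by linarith⟩
  have hcbc : cos c ≤ cos b := cos_le_cos_of_nonneg_of_le_pi (by linarith) (by linarith [pi_pos]) hbc
  have hcab : cos b ≤ cos a := cos_le_cos_of_nonneg_of_le_pi (by linarith) (by linarith [pi_pos]) hab
  have hA' : (A : ℝ) ≠ 0 := by exact_mod_cast hA
  have hB' : (B : ℝ) ≠ 0 := by exact_mod_cast hB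
  have hC' : (C : ℝ) ≠ 0 := by exact_mod_cast hC
  have ra' := ha
  have rb' : ∃ q : ℚ, b' = π * q := by
    obtain ⟨q, hq⟩ := hb
    rcases hb' with h | h
    · exact ⟨q, by rw [h, hq]⟩
    · exact ⟨-q, by rw [h, hq]; push_cast; ring⟩
  have rc' : ∃ q : ℚ, c' = π * q := by
    obtain ⟨q, hq⟩ := hc
    rcases hc' with h | h
    · exact ⟨q, by rw [h, hq]⟩
    · exact ⟨-q, by rw [h, hq]; push_cast; ring⟩
  have rsub : ∀ x y : ℝ, (∃ q : ℚ, x = π * q) → (∃ q : ℚ, y = π * q) → ∃ q : ℚ, x - y = π * q := by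
    rintro x y ⟨q, rfl⟩ ⟨r, rfl⟩
    exact ⟨q - r, by push_cast; ring⟩
  rw [← hcb, ← hcc] at heq
  have e1 : (A : ℝ) + B * cos (a - b') + C * cos (a - c') = 0 := by
    rw [cos_sub, cos_sub]
    linear_combination cos a * heq + sin a * hs - A * sin_sq_add_cos_sq a
  have e2 : (A : ℝ) * cos (a - b') + B + C * cos (b' - c') = 0 := by
    rw [cos_sub, cos_sub]
    linear_combination cos b' * heq + sin b' * hs - B * sin_sq_add_cos_sq b'
  have e3 : (A : ℝ) * cos (a - c') + B * cos (b' - c') + C = 0 := by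
    rw [cos_sub, cos_sub]
    linear_combination cos c' * heq + sin c' * hs - C * sin_sq_add_cos_sq c'
  have qp : ∃ q : ℚ, cos (a - b') = q := by
    refine ⟨(C ^ 2 - A ^ 2 - B ^ 2) / (2 * A * B), ?_⟩
    push_cast
    field_simp
    linear_combination (A : ℝ) * e1 + (B : ℝ) * e2 - (C : ℝ) * e3
  have qq : ∃ q : ℚ, cos (a - c') = q := by
    refine ⟨(B ^ 2 - A ^ 2 - C ^ 2) / (2 * A * C), ?_⟩
    push_cast
    field_simp
    linear_combination (A : ℝ) * e1 - (B : ℝ) * e2 + (C : ℝ) * e3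
  have qr : ∃ q : ℚ, cos (b' - c') = q := by
    refine ⟨(A ^ 2 - B ^ 2 - C ^ 2) / (2 * B * C), ?_⟩
    push_cast
    field_simp
    linear_combination - (A : ℝ) * e1 + (B : ℝ) * e2 + (C : ℝ) * e3
  have s1 : (A : ℝ) * sin (a - b') = C * sin (b' - c') := by
    rw [sin_sub, sin_sub]
    linear_combination  (-sin b') * heq + cos b' * hs
  have s2 : (A : ℝ) * sin (a - c') = - B * sin (b' - c') := by
    rw [sin_sub, sin_sub]
    linear_combination  (-sin c') * heq + cos c' * hs
  have bd1 : -π < a - b' := by rcases hb' with rfl | rfl <;> linarith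
  have bd2 : a - b' < π := by rcases hb' with rfl | rfl <;> linarith
  have bd3 : -π < a - c' := by rcases hc' with rfl | rfl <;> linarith
  have bd4 : a - c' < π := by rcases hc' with rfl | rfl <;> linarith
  have bd5 : -π < b' - c' := by rcases hb' with rfl | rfl <;> rcases hc' with rfl | rfl <;> linarith
  have bd6 : b' - c' < π := by rcases hb' with rfl | rfl <;> rcases hc' with rfl | rfl <;> linarith
  have sz : ∀ x : ℝ, -π < x → x < π → sin x = 0 → x = 0 := fun x h1 h2 h =>
    (sin_eq_zero_iff_of_lt_of_lt h1 h2).1 h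
  have allz : a - b' = 0 → b' - c' = 0 → False := by
    intro h1 h2
    apply hne
    rcases hb' with rfl | rfl <;> rcases hc' with rfl | rfl <;> constructor <;> linarith
  have n1 : a - b' ≠ 0 := by
    intro h
    have h' := h
    rw [h, sin_zero, mul_zero] at s1
    exact allz h' (sz _ bd5 bd6 ((mul_eq_zero.1 s1.symm).resolve_left hC'))
  have n3 : b' - c' ≠ 0 := by
    intro h
    have h' := h
    rw [h, sin_zero, mul_zero] at s1
    exact allz (sz _ bd1 bd2 ((mul_eq_zero.1 s1).resolve_left hA')) h'
  have n2 : a - c' ≠ 0 := by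
    intro h
    rw [h, sin_zero, mul_zero] at s2
    exact n3 (sz _ bd5 bd6 ((mul_eq_zero.1 s2.symm).resolve_left (neg_ne_zero.2 hB')))
  have k1 := niven_lt (rsub _ _ ra' rb') qp bd1 bd2 n1
  have k2 := niven_lt (rsub _ _ ra' rc') qq bd3 bd4 n2
  have k3 := niven_lt (rsub _ _ rb' rc') qr bd5 bd6 n3
  have main : cos (a - b') = 1 / 2 ∧ cos (a - c') = 1 / 2 ∧ cos (b' - c') = -1 / 2 ∧
      (B : ℝ) = -A ∧ (C : ℝ) = -A := by
    rw [hcb, hcc] at heq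
    rcases k1 with k1 | k1 | k1 <;> rcases k2 with k2 | k2 | k2 <;> rcases k3 with k3 | k3 | k3 <;>
      rw [k1, k2] at e1 <;> rw [k1, k3] at e2 <;> rw [k2, k3] at e3 <;>
      first
      | exact absurd (by linarith : (A : ℝ) = 0) hA'
      | exact absurd (by linarith : (B : ℝ) = 0) hB'
      | exact absurd (by linarith : (C : ℝ) = 0) hC'
      | exact ⟨k1, k2, k3, by linarith, by linarith⟩
      | (exfalso
         have g1 : (B : ℝ) = A := by linarith
         have g2 : (C : ℝ) = A := by linarith
         rw [g1, g2] at heq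
         have : (A : ℝ) * (cos a + cos b + cos c) = 0 := by linear_combination heq
         rcases mul_eq_zero.1 this with h | h
         · exact hA' h
         · linarith)
      | (exfalso
         have g1 : (B : ℝ) = A := by linarith
         have g2 : (C : ℝ) = -A := by linarith
         rw [g1, g2] at heq
         have : (A : ℝ) * (cos a + cos b - cos c) = 0 := by linear_combination heq
         rcases mul_eq_zero.1 this with h | h
         · exact hA' h
         · linarith)
      | (exfalso
         have g1 : (B : ℝ) = -A := by linarith
         have g2 : (C : ℝ) = A := by linarith
         rw [g1, g2] at heq
         have : (A : ℝ) * (cos a - cos b + cos c) = 0 := by linear_combination heq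
         rcases mul_eq_zero.1 this with h | h
         · exact hA' h
         · linarith)
  obtain ⟨m1, m2, m3, m4, m5⟩ := main
  have hBA : B = -A := by exact_mod_cast m4
  have hCA : C = -A := by exact_mod_cast m5
  have l1 := abs_of_cos_half bd1 bd2 m1
  have l2 := abs_of_cos_half bd3 bd4 m2
  have l3 := abs_of_cos_neg_half bd5 bd6 m3
  right
  have hpi := pi_pos
  refine ⟨a, h0a, ?_⟩
  have : b = π / 3 - a ∧ c = π / 3 + a := by
    rcases hb' with rfl | rfl <;> rcases hc' with rfl | rfl <;> rcases l1 with l1 | l1 <;>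
      rcases l2 with l2 | l2 <;> rcases l3 with l3 | l3 <;>
      first
      | (exfalso; linarith)
      | (constructor <;> linarith)
  exact ⟨by linarith, rfl, this.1, this.2, hBA, hCA⟩

lemma cos_two_pi_div_five : cos (2 * π / 5) = (√5 - 1) / 4 := by
  rw [show 2 * π / 5 = 2 * (π / 5) by ring, cos_two_mul, cos_pi_div_five]
  have : √5 ^ 2 = 5 := sq_sqrt (by norm_num)
  linear_combination this / 8

lemma irr_aux {r : ℝ} (hr : Irrational r) (x y : ℚ) (h : (x : ℝ) * r + y = 0) : x = 0 ∧ y = 0 := by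
  have hx : x = 0 := by
    by_contra hx
    apply hr
    have hx' : (x : ℝ) ≠ 0 := by exact_mod_cast hx
    refine ⟨-y / x, ?_⟩
    push_cast
    field_simp
    linarith
  subst hx
  refine ⟨rfl, ?_⟩
  simpa using h

lemma five_aux (a b c : ℝ)
    (hab : a ≤ b) (hbc : b ≤ c)
    (hne : ¬ (a = b ∧ b = c))
    (A B C : ℚ) (hA : A ≠ 0) (hB : B ≠ 0) (hC : C ≠ 0)
    (heq : (A : ℝ) * cos a + B * cos b + C * cos c = 0)
    (ha : a = π / 3 ∨ a = π / 5 ∨ a = 2 * π / 5)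
    (hb : b = π / 3 ∨ b = π / 5 ∨ b = 2 * π / 5)
    (hc : c = π / 3 ∨ c = π / 5 ∨ c = 2 * π / 5) : Concl a b c A B C := by
  have hpi := pi_pos
  have h5 : Irrational √5 := by
    have := Nat.Prime.irrational_sqrt (p := 5) (by norm_num)
    exact_mod_cast this
  have key : ∀ x y : ℚ, (x : ℝ) * √5 + y = 0 → x = 0 ∧ y = 0 := irr_aux h5
  rcases ha with rfl | rfl | rfl <;> rcases hb with rfl | rfl | rfl <;> rcases hc with rfl | rfl | rfl <;>
    first
    | (exfalso; linarith)
    | (exfalso; exact hne ⟨rfl, rfl⟩)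
    | skip
  all_goals simp only [cos_pi_div_three, cos_pi_div_five, cos_two_pi_div_five] at heq
  · have := key C (2 * A + 2 * B - C) (by push_cast; linear_combination 4 * heq)
    exact absurd this.1 hC
  · have := key (B + C) (2 * A - B - C) (by push_cast; linear_combination 4 * heq)
    exact absurd (by linarith) hA
  · have := key A (A + 2 * B + 2 * C) (by push_cast; linear_combination 4 * heq)
    exact absurd this.1 hA
  · have := key (A + C) (A + 2 * B - C) (by push_cast; linear_combination 4 * heq)
    exact Or.inl ⟨rfl, rfl, rfl, by linarith, by linarith⟩
  · have := key (A + B) (A + B + 2 * C) (by push_cast; linear_combination 4 * heq)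
    exact absurd (by linarith) hC
  · have := key (A + B + C) (A + B - C) (by push_cast; linear_combination 4 * heq)
    exact absurd (by linarith) hC
  · have := key (A + B + C) (A - B - C) (by push_cast; linear_combination 4 * heq)
    exact absurd (by linarith) hA

lemma twelve_aux (a b c : ℝ)
    (hab : a ≤ b) (hbc : b ≤ c)
    (hne : ¬ (a = b ∧ b = c))
    (A B C : ℚ) (hA : A ≠ 0) (hB : B ≠ 0) (hC : C ≠ 0)
    (heq : (A : ℝ) * cos a + B * cos b + C * cos c = 0)
    (ha : a = π / 3 ∨ a = π / 6)
    (hb : b = π / 3 ∨ b = π / 6)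
    (hc : c = π / 3 ∨ c = π / 6) : False := by
  have hpi := pi_pos
  have h3 : Irrational √3 := by
    have := Nat.Prime.irrational_sqrt (p := 3) (by norm_num)
    exact_mod_cast this
  have key : ∀ x y : ℚ, (x : ℝ) * √3 + y = 0 → x = 0 ∧ y = 0 := irr_aux h3
  rcases ha with rfl | rfl <;> rcases hb with rfl | rfl <;> rcases hc with rfl | rfl <;>
    first
    | (exfalso; linarith)
    | (exfalso; exact hne ⟨rfl, rfl⟩)
    | skip
  all_goals simp only [cos_pi_div_three, cos_pi_div_six] at heq
  · have := key A (B + C) (by push_cast; linear_combination 2 * heq)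
    exact absurd this.1 hA
  · have := key (A + B) C (by push_cast; linear_combination 2 * heq)
    exact absurd this.2 hC

lemma delta_aux (f d : Fin 3 → ℝ) (hf : ∀ i, f i ≠ 0) (hd : ∀ i, d i = 0 ∨ d i = 1)
    (h1 : ∑ i, f i = 0) (h2 : ∑ i, f i * d i = 0) (i0 : Fin 3) (h0 : d i0 = 1) : ∀ i, d i = 1 := by
  rw [Fin.sum_univ_three] at h1 h2
  have f0 := hf 0
  have f1 := hf 1
  have f2 := hf 2
  have key : (d 0 = 0 ∧ d 1 = 0 ∧ d 2 = 0) ∨ (d 0 = 1 ∧ d 1 = 1 ∧ d 2 = 1) := by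
    rcases hd 0 with e0 | e0 <;> rcases hd 1 with e1 | e1 <;> rcases hd 2 with e2 | e2 <;>
      rw [e0, e1, e2] at h2 <;>
      first
      | exact Or.inl ⟨e0, e1, e2⟩
      | exact Or.inr ⟨e0, e1, e2⟩
      | exact absurd (by linarith) f0
      | exact absurd (by linarith) f1
      | exact absurd (by linarith) f2
  rcases key with ⟨e0, e1, e2⟩ | ⟨e0, e1, e2⟩
  · exfalso
    fin_cases i0 <;> simp_all
  · intro i
    fin_cases i <;> simp_all

lemma signs_of_cls (p : ℕ) (hp : p.Prime) (hp3 : 3 ≤ p) (ζ : ℂ) (l : Fin 3 → ℕ) (α : Fin 3 → ℝ)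
    (A : Fin 3 → ℚ) (hA : ∀ i, A i ≠ 0) (hcos : ∀ i, 0 < cos (α i))
    (hz : ∀ i, ζ ^ (l i : ℤ) = Complex.exp (α i * Complex.I))
    (hsum : ∑ i, (A i : ℝ) * cos (α i) = 0) (i0 : Fin 3) (hi0 : ¬ p ∣ l i0)
    (hcls : cls p ζ l A (l i0) = 0) :
    ∃ s : Fin 3 → ℝ, (∀ i, s i = 1 ∨ s i = -1) ∧ ∑ i, (A i : ℝ) * sin (s i * α i) = 0 := by
  have hz1 : ∀ i, ζ ^ (l i : ℤ) = (cos (α i) : ℂ) + (sin (α i) : ℂ) * Complex.I := by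
    intro i
    rw [hz, Complex.exp_mul_I, Complex.ofReal_cos, Complex.ofReal_sin]
  have hz2 : ∀ i, ζ ^ (-(l i : ℤ)) = (cos (α i) : ℂ) - (sin (α i) : ℂ) * Complex.I := by
    intro i
    rw [zpow_neg, hz, ← Complex.exp_neg, ← neg_mul, Complex.exp_mul_I, Complex.ofReal_cos,
      Complex.ofReal_sin, Complex.cos_neg, Complex.sin_neg]
    ring
  have hpZ : Prime (p : ℤ) := Nat.prime_iff_prime_int.1 hp
  have hnd : ¬ (p : ℤ) ∣ (l i0 : ℤ) := by exact_mod_cast hi0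
  have excl : ∀ i, (p : ℤ) ∣ (l i : ℤ) - l i0 → (p : ℤ) ∣ -(l i : ℤ) - l i0 → False := by
    intro i h1 h2
    have h3 : (p : ℤ) ∣ 2 * (l i0 : ℤ) := by
      have := dvd_neg.2 (dvd_add h1 h2)
      ring_nf at this ⊢
      exact this
    rcases hpZ.dvd_or_dvd h3 with h | h
    · have := Int.le_of_dvd (by norm_num) h
      omega
    · exact hnd h
  classical
  let d : Fin 3 → ℝ := fun i => (if (p : ℤ) ∣ (l i : ℤ) - l i0 then 1 else 0)
    + (if (p : ℤ) ∣ -(l i : ℤ) - l i0 then 1 else 0)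
  let s : Fin 3 → ℝ := fun i => if (p : ℤ) ∣ (l i : ℤ) - l i0 then 1 else -1
  have hre : ∑ i, (A i : ℝ) * cos (α i) * d i = 0 := by
    have h := congrArg Complex.re hcls
    rw [cls, Complex.re_sum, Complex.zero_re] at h
    rw [← h]
    refine Finset.sum_congr rfl fun i _ => ?_
    rw [hz1, hz2, ← Complex.ofReal_ratCast, Complex.re_ofReal_mul]
    simp only [d]
    split_ifs <;> simp [-Complex.ofReal_cos, -Complex.ofReal_sin] <;> ring
  have hd : ∀ i, d i = 0 ∨ d i = 1 := by
    intro i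
    simp only [d]
    split_ifs with h1 h2
    · exact (excl i h1 h2).elim
    all_goals simp
  have hd0 : d i0 = 1 := by
    rcases hd i0 with h | h
    · exfalso
      simp only [d, sub_self, dvd_zero, if_true] at h
      split_ifs at h <;> norm_num at h
    · exact h
  have hall := delta_aux (fun i => (A i : ℝ) * cos (α i)) d
    (fun i => mul_ne_zero (by exact_mod_cast hA i) (hcos i).ne') hd hsum hre i0 hd0
  refine ⟨s, fun i => ?_, ?_⟩
  · simp only [s]
    split_ifs <;> simp
  · have h := congrArg Complex.im hcls
    rw [cls, Complex.im_sum, Complex.zero_im] at h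
    rw [← h]
    refine Finset.sum_congr rfl fun i _ => ?_
    have hdi := hall i
    rw [hz1, hz2, ← Complex.ofReal_ratCast, Complex.im_ofReal_mul]
    simp only [d, s] at hdi ⊢
    split_ifs at hdi ⊢ with h1 h2
    · norm_num at hdi
    · simp [-Complex.ofReal_cos, -Complex.ofReal_sin]
    · simp [-Complex.ofReal_cos, -Complex.ofReal_sin]
    · norm_num at hdi

lemma sum_three_distinct (f : Fin 3 → ℂ) (i0 i1 i2 : Fin 3) (h01 : i0 ≠ i1) (h02 : i0 ≠ i2) (h12 : i1 ≠ i2) :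
    ∑ i, f i = f i0 + f i1 + f i2 := by
  rw [Fin.sum_univ_three]
  fin_cases i0 <;> fin_cases i1 <;> fin_cases i2 <;> simp at h01 h02 h12 ⊢ <;> ring

lemma tenth_aux {x : ℝ} (h0 : 0 < x) (h1 : x < π / 2) (h : Complex.exp (x * Complex.I) ^ 10 = 1) :
    x = π / 5 ∨ x = 2 * π / 5 := by
  rw [← Complex.exp_nat_mul, Complex.exp_eq_one_iff] at h
  obtain ⟨n, hn⟩ := h
  have hx : 10 * x = n * (2 * π) := by
    have h2 : ((10 * x : ℝ) : ℂ) * Complex.I = ((n * (2 * π) : ℝ) : ℂ) * Complex.I := by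
      push_cast
      push_cast at hn
      linear_combination hn
    exact_mod_cast mul_right_cancel₀ Complex.I_ne_zero h2
  have hpi := pi_pos
  have n0 : 0 < n := by
    have : (0 : ℝ) < n := by
      by_contra hneg
      push Not at hneg
      nlinarith
    exact_mod_cast this
  have n3 : n < 3 := by
    have : (n : ℝ) < 3 := by
      by_contra hneg
      push Not at hneg
      nlinarith
    exact_mod_cast this
  interval_cases n
  · left; push_cast at hx; linarith
  · right; push_cast at hx; linarith

lemma five_class (ζ : ℂ) (M : ℕ) (hω : (ζ ^ M) ^ 5 = 1) (l : Fin 3 → ℕ) (α : Fin 3 → ℝ)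
    (A : Fin 3 → ℚ) (hA : ∀ i, A i ≠ 0) (h0 : ∀ i, 0 < α i) (h2 : ∀ i, α i < π / 2)
    (hrat : ∀ i, ∃ q : ℚ, α i = π * q)
    (hz : ∀ i, ζ ^ (l i : ℤ) = Complex.exp (α i * Complex.I))
    (t : ℕ) (V : ℂ) (hV : ∀ j, cls 5 ζ l A j = (ζ ^ M) ^ (-j * t) * V)
    (i0 i1 i2 : Fin 3) (h01 : i0 ≠ i1) (h02 : i0 ≠ i2) (h12 : i1 ≠ i2)
    (c0 : (5 : ℤ) ∣ l i0)
    (c1 : ((5 : ℤ) ∣ (l i1 : ℤ) - 1 ∨ (5 : ℤ) ∣ -(l i1 : ℤ) - 1) ∧ ((5 : ℤ) ∣ (l i2 : ℤ) - 2 ∨ (5 : ℤ) ∣ -(l i2 : ℤ) - 2)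
      ∨ ((5 : ℤ) ∣ (l i2 : ℤ) - 1 ∨ (5 : ℤ) ∣ -(l i2 : ℤ) - 1) ∧ ((5 : ℤ) ∣ (l i1 : ℤ) - 2 ∨ (5 : ℤ) ∣ -(l i1 : ℤ) - 2)) :
    α i0 = π / 3 ∧ (α i1 = π / 5 ∨ α i1 = 2 * π / 5) := by
  have hpi := pi_pos
  have hw0 : ζ ^ M ≠ 0 := by
    intro h
    rw [h] at hω
    norm_num at hω
  have q1 := hV (l i1)
  have q2 := hV (-(l i1))
  have q0 := hV 0
  rw [cls, sum_three_distinct _ i0 i1 i2 h01 h02 h12] at q0 q1 q2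
  push_cast at q0 q1 q2
  rw [if_neg (by omega), if_neg (by omega), if_pos (by omega), if_neg (by omega), if_neg (by omega),
    if_neg (by omega)] at q1
  rw [if_neg (by omega), if_neg (by omega), if_neg (by omega), if_pos (by omega), if_neg (by omega),
    if_neg (by omega)] at q2
  rw [if_pos (by omega), if_pos (by omega), if_neg (by omega), if_neg (by omega), if_neg (by omega),
    if_neg (by omega)] at q0
  simp only [zpow_neg, hz, neg_mul, neg_neg, zero_mul, neg_zero, zpow_zero, add_zero, zero_add, mul_zero, one_mul] at q0 q1 q2
  set w := (ζ ^ M) ^ ((l i1 : ℤ) * t) with hw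
  have hw' : w ≠ 0 := zpow_ne_zero _ hw0
  have hw5 : w ^ 5 = 1 := by
    rw [hw, ← zpow_natCast, zpow_comm, zpow_natCast, hω, one_zpow]
  have hx : Complex.exp (α i1 * Complex.I) ≠ 0 := Complex.exp_ne_zero _
  set x := Complex.exp (α i1 * Complex.I) with hxdef
  have hA1 : (A i1 : ℂ) ≠ 0 := by exact_mod_cast hA i1
  have hA0 : (A i0 : ℝ) ≠ 0 := by exact_mod_cast hA i0
  have r1 : (A i1 : ℂ) * x * w = V := by rw [q1]; field_simp
  have r2 : (A i1 : ℂ) = V * w * x := by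
    have : (A i1 : ℂ) = (A i1 * x⁻¹) * x := by field_simp
    rw [this, q2]; ring
  have hV2 : V ^ 2 = (A i1 : ℂ) ^ 2 := by
    have : V * (V * w * x) = A i1 * (A i1 * x * w) := by rw [r1, ← r2]; ring
    have hwx : w * x ≠ 0 := mul_ne_zero hw' hx
    apply mul_right_cancel₀ hwx
    linear_combination this
  have hx2 : (x * w) ^ 2 = 1 := by
    apply mul_left_cancel₀ (pow_ne_zero 2 hA1)
    linear_combination ((A i1 : ℂ) * x * w + V) * r1 + hV2
  refine ⟨?_, tenth_aux (h0 i1) (h2 i1) ?_⟩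
  · have hc : V = ((2 * A i0 * cos (α i0) : ℝ) : ℂ) := by
      rw [← q0, ← Complex.exp_neg]
      push_cast
      rw [Complex.cos]
      ring_nf
    have hc2 : (2 * A i0 * cos (α i0)) ^ 2 = (A i1 : ℝ) ^ 2 := by
      rw [hc] at hV2
      exact_mod_cast hV2
    have hcp : 0 < cos (α i0) := cos_pos_of_mem_Ioo ⟨by linarith [h0 i0], h2 i0⟩
    have hq : ∃ q : ℚ, cos (α i0) = q := by
      rcases sq_eq_sq_iff_eq_or_eq_neg.1 hc2 with h | h
      · refine ⟨A i1 / (2 * A i0), ?_⟩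
        push_cast
        field_simp
        linarith
      · refine ⟨-A i1 / (2 * A i0), ?_⟩
        push_cast
        field_simp
        linarith
    have := niven_lt (hrat i0) hq (by linarith [h0 i0]) (by linarith [h2 i0]) (h0 i0).ne'
    rcases this with h | h | h
    · linarith
    · linarith
    · rcases abs_of_cos_half (by linarith [h0 i0]) (by linarith [h2 i0]) h with h | h
      · exact h
      · linarith [h0 i0]
  · have : (x * w) ^ 10 = x ^ 10 * (w ^ 5) ^ 2 := by ring
    rw [hw5, one_pow, mul_one] at this
    rw [← this, show (x * w) ^ 10 = ((x * w) ^ 2) ^ 5 by ring, hx2, one_pow]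

lemma cls_exists (p : ℕ) (ζ : ℂ) (l : Fin 3 → ℕ) (A : Fin 3 → ℚ) (j : ℤ) (h : cls p ζ l A j ≠ 0) :
    ∃ i, (p : ℤ) ∣ (l i : ℤ) - j ∨ (p : ℤ) ∣ -(l i : ℤ) - j := by
  by_contra hcon
  push Not at hcon
  apply h
  rw [cls]
  refine Finset.sum_eq_zero fun i _ => ?_
  rw [if_neg (hcon i).1, if_neg (hcon i).2]
  simp

lemma class_ne (p : ℕ) (x j j' : ℤ) (h : (p : ℤ) ∣ x - j ∨ (p : ℤ) ∣ -x - j)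
    (h' : (p : ℤ) ∣ x - j' ∨ (p : ℤ) ∣ -x - j') : (p : ℤ) ∣ j - j' ∨ (p : ℤ) ∣ j + j' := by
  rcases h with h | h <;> rcases h' with h' | h'
  · left; have := dvd_sub h' h; ring_nf at this ⊢; exact this
  · right; have := dvd_neg.2 (dvd_add h' h); ring_nf at this ⊢; exact this
  · right; have := dvd_neg.2 (dvd_add h' h); ring_nf at this ⊢; exact this
  · left; have := dvd_sub h' h; ring_nf at this ⊢; exact this

/-- Common outcome of the prime steps. -/
def Outcome (α : Fin 3 → ℝ) (A : Fin 3 → ℚ) : Prop :=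
  (∃ s : Fin 3 → ℝ, (∀ i, s i = 1 ∨ s i = -1) ∧ ∑ i, (A i : ℝ) * sin (s i * α i) = 0) ∨
  (∀ i, α i = π / 3 ∨ α i = π / 5 ∨ α i = 2 * π / 5)

lemma odd_prime_step (p M : ℕ) (hp : p.Prime) (hp3 : 3 ≤ p) (hM : 0 < M) (hcase : p ∣ M ∨ 5 ≤ p)
    (ζ : ℂ) (hζ : IsPrimitiveRoot ζ (p * M)) (l : Fin 3 → ℕ) (α : Fin 3 → ℝ)
    (A : Fin 3 → ℚ) (hA : ∀ i, A i ≠ 0) (h0 : ∀ i, 0 < α i) (h2 : ∀ i, α i < π / 2)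
    (hrat : ∀ i, ∃ q : ℚ, α i = π * q)
    (hz : ∀ i, ζ ^ (l i : ℤ) = Complex.exp (α i * Complex.I))
    (hsum : ∑ i, (A i : ℝ) * cos (α i) = 0)
    (hsumC : ∑ i, (A i : ℂ) * (ζ ^ (l i : ℤ) + ζ ^ (-(l i : ℤ))) = 0)
    (hmin : ∃ i, ¬ p ∣ l i) : Outcome α A := by
  have hpi := pi_pos
  have hcos : ∀ i, 0 < cos (α i) := fun i => cos_pos_of_mem_Ioo ⟨by linarith [h0 i], h2 i⟩
  obtain ⟨i, hi⟩ := hmin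
  by_cases hall : cls p ζ l A (l i) = 0
  · exact Or.inl (signs_of_cls p hp hp3 ζ l α A hA hcos hz hsum i hi hall)
  have hpM : ¬ p ∣ M := fun h => hall (cls_sq p M hp hM h ζ hζ l A hsumC _)
  have hp5 : 5 ≤ p := hcase.resolve_left hpM
  obtain ⟨t, V, hV⟩ := cls_const p M hp hM hpM ζ hζ l A hsumC
  have hω : IsPrimitiveRoot (ζ ^ M) p := hζ.pow (Nat.mul_pos hp.pos hM) (mul_comm p M)
  have hw0 : ζ ^ M ≠ 0 := hω.ne_zero hp.ne_zero
  have hV0 : V ≠ 0 := by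
    rintro rfl
    exact hall (by rw [hV, mul_zero])
  have hnz : ∀ j, cls p ζ l A j ≠ 0 := fun j => by
    rw [hV]; exact mul_ne_zero (zpow_ne_zero _ hw0) hV0
  have small : ∀ m : ℤ, m ≠ 0 → |m| < p → ¬ (p : ℤ) ∣ m := fun m hm hlt hd =>
    hm (Int.eq_zero_of_abs_lt_dvd hd hlt)
  have hp5' : (5 : ℤ) ≤ p := by exact_mod_cast hp5
  obtain ⟨i0, e0⟩ := cls_exists p ζ l A 0 (hnz 0)
  obtain ⟨i1, e1⟩ := cls_exists p ζ l A 1 (hnz 1)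
  obtain ⟨i2, e2⟩ := cls_exists p ζ l A 2 (hnz 2)
  have h01 : i0 ≠ i1 := by
    rintro rfl
    rcases class_ne _ _ _ _ e0 e1 with h | h
    · exact small _ (by norm_num) (by norm_num; omega) h
    · exact small _ (by norm_num) (by norm_num; omega) h
  have h02 : i0 ≠ i2 := by
    rintro rfl
    rcases class_ne _ _ _ _ e0 e2 with h | h
    · exact small _ (by norm_num) (by norm_num; omega) h
    · exact small _ (by norm_num) (by norm_num; omega) h
  have h12 : i1 ≠ i2 := by
    rintro rfl
    rcases class_ne _ _ _ _ e1 e2 with h | h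
    · exact small _ (by norm_num) (by norm_num; omega) h
    · exact small _ (by norm_num) (by norm_num; omega) h
  have hpe : p = 5 := by
    by_contra hne
    have hp6 : (6 : ℤ) ≤ p := by omega
    obtain ⟨i3, e3⟩ := cls_exists p ζ l A 3 (hnz 3)
    have h03 : i0 ≠ i3 := by
      rintro rfl
      rcases class_ne _ _ _ _ e0 e3 with h | h
      · exact small _ (by norm_num) (by norm_num; omega) h
      · exact small _ (by norm_num) (by norm_num; omega) h
    have h13 : i1 ≠ i3 := by
      rintro rfl
      rcases class_ne _ _ _ _ e1 e3 with h | h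
      · exact small _ (by norm_num) (by norm_num; omega) h
      · exact small _ (by norm_num) (by norm_num; omega) h
    have h23 : i2 ≠ i3 := by
      rintro rfl
      rcases class_ne _ _ _ _ e2 e3 with h | h
      · exact small _ (by norm_num) (by norm_num; omega) h
      · exact small _ (by norm_num) (by norm_num; omega) h
    omega
  subst hpe
  push_cast at e0 e1 e2
  have e0' : (5 : ℤ) ∣ l i0 := by omega
  have f1 := five_class ζ M hω.pow_eq_one l α A hA h0 h2 hrat hz t V hV i0 i1 i2 h01 h02 h12 e0'
    (Or.inl ⟨e1, e2⟩)
  have f2 := five_class ζ M hω.pow_eq_one l α A hA h0 h2 hrat hz t V hV i0 i2 i1 h02 h01 h12.symm e0'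
    (Or.inr ⟨e1, e2⟩)
  right
  intro k
  have : k = i0 ∨ k = i1 ∨ k = i2 := by omega
  rcases this with rfl | rfl | rfl
  · exact Or.inl f1.1
  · exact Or.inr f1.2
  · exact Or.inr f2.2

lemma two_step (m : ℕ) (hm : 0 < m) (ζ : ℂ) (hζ : IsPrimitiveRoot ζ (8 * m)) (l : Fin 3 → ℕ) (α : Fin 3 → ℝ)
    (A : Fin 3 → ℚ) (hA : ∀ i, A i ≠ 0) (h0 : ∀ i, 0 < α i) (h2 : ∀ i, α i < π / 2)
    (hα : ∀ i, α i * (8 * m : ℕ) = 2 * π * l i)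
    (hz : ∀ i, ζ ^ (l i : ℤ) = Complex.exp (α i * Complex.I))
    (hsum : ∑ i, (A i : ℝ) * cos (α i) = 0)
    (hsumC : ∑ i, (A i : ℂ) * (ζ ^ (l i : ℤ) + ζ ^ (-(l i : ℤ))) = 0)
    (hmin : ∃ i, ¬ 2 ∣ l i) : Outcome α A := by
  have hpi := pi_pos
  have hcos : ∀ i, 0 < cos (α i) := fun i => cos_pos_of_mem_Ioo ⟨by linarith [h0 i], h2 i⟩
  have gal : ∀ k : ℕ, k.Coprime (8 * m) → ∑ i, (A i : ℝ) * cos (k * α i) = 0 := by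
    intro k hk
    have h := galois_aux (8 * m) (by omega) ζ hζ l A hsumC k hk
    have h' : ((2 * ∑ i, (A i : ℝ) * cos (k * α i) : ℝ) : ℂ) = 0 := by
      rw [← h]
      push_cast
      rw [Finset.mul_sum]
      refine Finset.sum_congr rfl fun i _ => ?_
      rw [zpow_neg, mul_comm (k : ℤ), zpow_mul, hz, zpow_natCast, ← Complex.exp_nat_mul, ← Complex.exp_neg,
        Complex.cos]
      ring_nf
    have h'' : (2 * ∑ i, (A i : ℝ) * cos (k * α i) : ℝ) = 0 := by exact_mod_cast h'
    linarith
  have cop : ∀ n : ℕ, (1 + 2 * n * m).Coprime (8 * m) := by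
    intro n
    refine Nat.Coprime.mul_right ?_ (by simp)
    rw [show (8 : ℕ) = 2 ^ 3 by norm_num]
    refine Nat.Coprime.pow_right 3 ?_
    rw [Nat.coprime_comm, Nat.prime_two.coprime_iff_not_dvd, mul_assoc]
    omega
  have g2 := gal _ (cop 2)
  have g1 := gal _ (cop 1)
  have t2 : ∀ i, cos (((1 + 2 * 2 * m : ℕ) : ℝ) * α i) = (-1) ^ (l i) * cos (α i) := by
    intro i
    rw [← cos_add_nat_mul_pi]
    congr 1
    have := hα i
    push_cast at this ⊢
    linarith
  classical
  let d : Fin 3 → ℝ := fun i => if 2 ∣ l i then 0 else 1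
  have hd : ∀ i, d i = 0 ∨ d i = 1 := by
    intro i
    simp only [d]
    split_ifs <;> simp
  obtain ⟨i0, hi0⟩ := hmin
  have hre : ∑ i, (A i : ℝ) * cos (α i) * d i = 0 := by
    have : ∑ i, (A i : ℝ) * cos (α i) * d i = (∑ i, (A i : ℝ) * cos (α i)
        - ∑ i, (A i : ℝ) * cos (((1 + 2 * 2 * m : ℕ) : ℝ) * α i)) / 2 := by
      rw [← Finset.sum_sub_distrib, Finset.sum_div]
      refine Finset.sum_congr rfl fun i _ => ?_
      rw [t2]
      simp only [d]
      split_ifs with h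
      · rw [(even_iff_two_dvd.2 h).neg_one_pow]; ring
      · rw [(Nat.not_even_iff_odd.1 (fun h' => h (even_iff_two_dvd.1 h'))).neg_one_pow]; ring
    rw [this, g2, hsum]; simp
  have hall := delta_aux (fun i => (A i : ℝ) * cos (α i)) d
    (fun i => mul_ne_zero (by exact_mod_cast hA i) (hcos i).ne') hd hsum hre i0 (by simp only [d]; rw [if_neg hi0])
  have hodd : ∀ i, ∃ n, l i = 2 * n + 1 := by
    intro i
    have h := hall i
    simp only [d] at h
    split_ifs at h with h'
    · norm_num at h
    · exact ⟨l i / 2, by omega⟩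
  choose n hn using hodd
  left
  refine ⟨fun i => -(-1) ^ n i, fun i => ?_, ?_⟩
  · rcases neg_one_pow_eq_or ℝ (n i) with h | h <;> simp [h]
  · rw [← g1]
    refine Finset.sum_congr rfl fun i _ => ?_
    have t1 : cos (((1 + 2 * 1 * m : ℕ) : ℝ) * α i) = (-1) ^ (n i) * (- sin (α i)) := by
      rw [← cos_add_pi_div_two, ← cos_add_nat_mul_pi]
      congr 1
      have := hα i
      rw [hn i] at this
      push_cast at this ⊢
      linarith
    rw [t1]
    rcases neg_one_pow_eq_or ℝ (n i) with h | h <;> simp [h]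

lemma dvd_twelve (N : ℕ) (h8 : ¬ 8 ∣ N) (h9 : ¬ 9 ∣ N) (h : ∀ p, p.Prime → 5 ≤ p → ¬ p ∣ N) : N ∣ 12 := by
  rw [Nat.dvd_iff_prime_pow_dvd_dvd]
  intro p k hp hd
  rcases Nat.eq_zero_or_pos k with rfl | hk
  · simp
  have hpN : p ∣ N := (dvd_pow_self p hk.ne').trans hd
  have hp5 : p < 5 := by
    by_contra hcon
    exact h p hp (by omega) hpN
  have hp2 := hp.two_le
  interval_cases p
  · have : k < 3 := by
      by_contra hcon
      exact h8 ((pow_dvd_pow 2 (by omega : 3 ≤ k)).trans hd)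
    interval_cases k <;> norm_num
  · have : k < 2 := by
      by_contra hcon
      exact h9 ((pow_dvd_pow 3 (by omega : 2 ≤ k)).trans hd)
    interval_cases k; norm_num
  · norm_num at hp

lemma exists_den (α : Fin 3 → ℝ) (h0 : ∀ i, 0 < α i) (hrat : ∀ i, ∃ q : ℚ, α i = π * q) :
    ∃ N : ℕ, 0 < N ∧ ∃ l : Fin 3 → ℕ, ∀ i, α i * N = 2 * π * l i := by
  choose q hq using hrat
  refine ⟨2 * ∏ i, (q i).den, by
    have : 0 < ∏ i, (q i).den := Finset.prod_pos fun i _ => (q i).den_pos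
    omega, ?_⟩
  have : ∀ i, ∃ n : ℕ, α i * (2 * ∏ i, (q i).den : ℕ) = 2 * π * n := by
    intro i
    obtain ⟨k, hk⟩ := Finset.dvd_prod_of_mem (fun i => (q i).den) (Finset.mem_univ i)
    have hqpos : 0 < q i := by
      have := h0 i
      rw [hq i] at this
      exact_mod_cast (pos_iff_pos_of_mul_pos this).1 pi_pos
    have hnum : ((q i).num.toNat : ℤ) = (q i).num := Int.toNat_of_nonneg (Rat.num_nonneg.2 hqpos.le)
    refine ⟨(q i).num.toNat * k, ?_⟩
    rw [hk, hq i]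
    have e1 : ((q i : ℚ) : ℝ) * (q i).den = ((q i).num : ℝ) := by exact_mod_cast Rat.mul_den_eq_num (q i)
    have e2 : (((q i).num.toNat : ℕ) : ℝ) = ((q i).num : ℝ) := by exact_mod_cast hnum
    push_cast
    rw [e2]
    linear_combination 2 * π * k * e1
  choose l hl using this
  exact ⟨l, hl⟩

lemma core_s19 (α : Fin 3 → ℝ) (A : Fin 3 → ℚ) (hA : ∀ i, A i ≠ 0) (h0 : ∀ i, 0 < α i) (h2 : ∀ i, α i < π / 2)
    (hrat : ∀ i, ∃ q : ℚ, α i = π * q) (hsum : ∑ i, (A i : ℝ) * cos (α i) = 0) :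
    Outcome α A ∨ ∀ i, α i = π / 3 ∨ α i = π / 6 := by
  classical
  have hpi := pi_pos
  have hex := exists_den α h0 hrat
  obtain ⟨hN, l, hl⟩ := Nat.find_spec hex
  have hmin := fun m => Nat.find_min hex (m := m)
  set N := Nat.find hex with hNdef
  clear_value N
  have hnd : ∀ p : ℕ, p.Prime → p ∣ N → ∃ i, ¬ p ∣ l i := by
    intro p hp hpN
    by_contra hcon
    push Not at hcon
    choose l' hl' using hcon
    obtain ⟨M, rfl⟩ := hpN
    have hM : 0 < M := Nat.pos_of_mul_pos_left hN
    refine hmin M ?_ ⟨hM, l', fun i => ?_⟩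
    · have := hp.two_le
      nlinarith
    · have := hl i
      rw [hl' i] at this
      push_cast at this
      have hp0 : (p : ℝ) ≠ 0 := by exact_mod_cast hp.ne_zero
      apply mul_left_cancel₀ hp0
      linarith
  have hζ := Complex.isPrimitiveRoot_exp N hN.ne'
  have hz : ∀ i, Complex.exp (2 * π * Complex.I / N) ^ (l i : ℤ) = Complex.exp (α i * Complex.I) := by
    intro i
    rw [zpow_natCast, ← Complex.exp_nat_mul]
    congr 1
    have hN0 : (N : ℂ) ≠ 0 := by exact_mod_cast hN.ne'
    have : (α i : ℂ) * N = 2 * π * l i := by exact_mod_cast hl i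
    field_simp
    linear_combination -this
  generalize Complex.exp (2 * π * Complex.I / N) = ζ at hζ hz
  have hsumC : ∑ i, (A i : ℂ) * (ζ ^ (l i : ℤ) + ζ ^ (-(l i : ℤ))) = 0 := by
    have h' : ((2 * ∑ i, (A i : ℝ) * cos (α i) : ℝ) : ℂ) = 0 := by rw [hsum]; simp
    rw [← h']
    push_cast
    rw [Finset.mul_sum]
    refine Finset.sum_congr rfl fun i _ => ?_
    rw [zpow_neg, hz, ← Complex.exp_neg, Complex.cos]
    ring_nf
  by_cases h8 : 8 ∣ N
  · have hm := hnd 2 Nat.prime_two (Dvd.dvd.trans (by norm_num) h8)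
    obtain ⟨m, rfl⟩ := h8
    exact Or.inl (two_step m (by omega) ζ hζ l α A hA h0 h2 hl hz hsum hsumC hm)
  by_cases h9 : 9 ∣ N
  · have hm := hnd 3 Nat.prime_three (Dvd.dvd.trans (by norm_num) h9)
    obtain ⟨m, rfl⟩ := h9
    rw [show 9 * m = 3 * (3 * m) by ring] at hζ
    exact Or.inl (odd_prime_step 3 (3 * m) Nat.prime_three le_rfl (by omega) (Or.inl ⟨m, rfl⟩) ζ hζ l α A hA
      h0 h2 hrat hz hsum hsumC hm)
  by_cases h5 : ∃ p, p.Prime ∧ 5 ≤ p ∧ p ∣ N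
  · obtain ⟨p, hp, hp5, hd⟩ := h5
    have hm := hnd p hp hd
    obtain ⟨m, rfl⟩ := hd
    exact Or.inl (odd_prime_step p m hp (by omega) (Nat.pos_of_mul_pos_left hN) (Or.inr hp5) ζ hζ l α A hA
      h0 h2 hrat hz hsum hsumC hm)
  push Not at h5
  obtain ⟨e, he⟩ := dvd_twelve N h8 h9 h5
  right
  intro i
  have h12 : α i * 12 = 2 * π * (l i * e : ℕ) := by
    have he' : (12 : ℝ) = N * e := by exact_mod_cast he
    rw [he']
    push_cast
    linear_combination (e : ℝ) * hl i
  have hi0 := h0 i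
  have hi2 := h2 i
  generalize l i * e = n at h12
  have n0 : 0 < n := by
    rcases Nat.eq_zero_or_pos n with rfl | h
    · simp at h12; linarith
    · exact h
  have n3 : n < 3 := by
    have : (n : ℝ) < 3 := by
      by_contra hneg
      push Not at hneg
      nlinarith
    exact_mod_cast this
  interval_cases n
  · right; push_cast at h12; linarith
  · left; push_cast at h12; linarith

theorem stmt19 (a b c : ℝ)
    (ha : ∃ qa : ℚ, a = π * qa) (hb : ∃ qb : ℚ, b = π * qb) (hc : ∃ qc : ℚ, c = π * qc)
    (hab : a ≤ b) (hbc : b ≤ c)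
    (h0a : 0 < a) (hc2 : c < π / 2)
    (hne : ¬ (a = b ∧ b = c))
    (A B C : ℚ) (hA : A ≠ 0) (hB : B ≠ 0) (hC : C ≠ 0)
    (heq : (A : ℝ) * Real.cos a + (B : ℝ) * Real.cos b + (C : ℝ) * Real.cos c = 0) :
    (a = π / 5 ∧ b = π / 3 ∧ c = 2 * π / 5 ∧ B = -A ∧ C = -A) ∨
    (∃ θ : ℝ, 0 < θ ∧ θ < π / 6 ∧ a = θ ∧ b = π / 3 - θ ∧ c = π / 3 + θ ∧ B = -A ∧ C = -A) := by
  change Concl a b c A B C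
  have h := core_s19 ![a, b, c] ![A, B, C]
    (by intro i; fin_cases i <;> simp [hA, hB, hC])
    (by intro i; fin_cases i <;> simp <;> linarith)
    (by intro i; fin_cases i <;> simp <;> linarith)
    (by intro i; fin_cases i <;> simp [ha, hb, hc])
    (by rw [Fin.sum_univ_three]; simpa using heq)
  rcases h with (⟨s, hs, h⟩ | h) | h
  · rw [Fin.sum_univ_three] at h
    simp only [Matrix.cons_val] at h
    rcases hs 0 with e | e
    · rw [e, one_mul] at h
      refine triangle_aux a b c (s 1 * b) (s 2 * c) ha hb hc hab hbc h0a hc2 hne A B C hA hB hC ?_ ?_ heq h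
      · rcases hs 1 with e | e <;> simp [e]
      · rcases hs 2 with e | e <;> simp [e]
    · rw [e, neg_one_mul, sin_neg] at h
      refine triangle_aux a b c (-(s 1 * b)) (-(s 2 * c)) ha hb hc hab hbc h0a hc2 hne A B C hA hB hC ?_ ?_ heq ?_
      · rcases hs 1 with e | e <;> simp [e]
      · rcases hs 2 with e | e <;> simp [e]
      · rw [sin_neg, sin_neg]; linarith
  · exact five_aux a b c hab hbc hne A B C hA hB hC heq (h 0) (h 1) (h 2)
  · exact (twelve_aux a b c hab hbc hne A B C hA hB hC heq (h 0) (h 1) (h 2)).elim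
end
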